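/- arXiv:2410.03467 — 3 statements merged into one kernel-verified Lean document; each statement's English description precedes it below -/
import Mathlib

section
/- Let n be a positive integer and let F be a field whose characteristic is 0 or an odd rational prime p with gcd(n,p) = 1. Then the F-vector space Der_F(F V_{8n}) of F-derivations of the group algebra F V_{8n} has dimension 3(2n−1) over F if n is odd, and dimension 6(n−1) over F if n is even. -/
/-- The relators of the presentation
`V_{8n} = ⟨a, b ∣ a^{2n} = b⁴ = 1, (ba)² = 1, (b⁻¹a)² = 1⟩`,
where `a` is the generator indexed by `0` and `b` the one indexed by `1`.
(The relations `ba = a⁻¹b⁻¹` and `b⁻¹a = a⁻¹b` are equivalent to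
`(ba)² = 1` and `(b⁻¹a)² = 1` respectively.) -/
def V8nRels (n : ℕ) : Set (FreeGroup (Fin 2)) :=
  {(FreeGroup.of 0) ^ (2 * n), (FreeGroup.of 1) ^ 4,
   (FreeGroup.of 1 * FreeGroup.of 0) ^ 2,
   ((FreeGroup.of 1)⁻¹ * FreeGroup.of 0) ^ 2}

/-- The group `V_{8n}` of order `8n`. -/
abbrev V8n (n : ℕ) : Type := PresentedGroup (V8nRels n)

/-- The generator `a` of `V_{8n}`. -/
def aV (n : ℕ) : V8n n := PresentedGroup.of 0

/-- The generator `b` of `V_{8n}`. -/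
def bV (n : ℕ) : V8n n := PresentedGroup.of 1
/-- The `F`-vector space of `F`-derivations of an `F`-algebra `A`,
realized as the `F`-linear endomorphisms of `A` satisfying the Leibniz rule. -/
def fDerivations (F : Type*) [CommSemiring F] (A : Type*) [Ring A] [Algebra F A] :
    Submodule F (A →ₗ[F] A) where
  carrier := {d | ∀ x y : A, d (x * y) = d x * y + x * d y}
  zero_mem' := by intro x y; simp
  add_mem' := by
    intro d e hd he x y
    simp only [LinearMap.add_apply, hd x y, he x y, add_mul, mul_add]
    abel
  smul_mem' := by
    intro c d hd x y
    simp only [LinearMap.smul_apply, hd x y, smul_add, smul_mul_assoc, mul_smul_comm]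

/-!
When `|G|` is invertible, averaging over `G` makes every derivation of `F G` inner: a derivation `d`
is the commutator with `|G|⁻¹ ∑ d(g) g⁻¹`. Hence `Der_F(F G)` is `F G` modulo its center, the space
of class functions, and has dimension `|G|` minus the number of conjugacy classes of `G`.

The group `V_{8n}` has the abelian subgroup `N = ⟨a, b²⟩` of index two. With `Z` the center, the
elements of `N` outside `Z` have centralizer `N` and those outside `N` have a centralizer of order
`2 |N ∩ Z|`, so counting commuting pairs gives `2k = |N| + 3 |N ∩ Z|` for the number `k` of
classes. That the presentation does not collapse `N` is seen in two dihedral groups.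
-/

section Derivations

attribute [local instance] LieRing.ofAssociativeRing

theorem ad_mem_fDerivations (R : Type*) [CommRing R] {A : Type*} [Ring A] [Algebra R A] (a : A) :
    LieAlgebra.ad R A a ∈ fDerivations R A := fun x y ↦ by
  simp only [LieAlgebra.ad_apply, Ring.lie_def]
  noncomm_ring

theorem ker_ad_eq_center (R A : Type*) [CommRing R] [Ring A] [Algebra R A] :
    (LieAlgebra.ad R A).toLinearMap.ker = (Subalgebra.center R A).toSubmodule := by
  ext a
  simp only [LinearMap.mem_ker, LinearMap.ext_iff, LieHom.coe_toLinearMap, LieAlgebra.ad_apply,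
    Ring.lie_def, LinearMap.zero_apply, sub_eq_zero, Subalgebra.mem_toSubmodule,
    Subalgebra.mem_center_iff, eq_comm]

theorem lie_sum_apply_mul_inv {R A G : Type*} [CommSemiring R] [Ring A] [Algebra R A] [Group G]
    [Fintype G] {d : A →ₗ[R] A} (hd : d ∈ fDerivations R A) (u : G →* A) (k : G) :
    ⁅∑ g, d (u g) * u g⁻¹, u k⁆ = Nat.card G • d (u k) := by
  have translate (g : G) : u k * (d (u g) * u g⁻¹) =
      d (u (k * g)) * u (k * g)⁻¹ * u k - d (u k) := by
    have hk : u (k * g)⁻¹ * u k = u g⁻¹ := by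
      rw [← map_mul, mul_inv_rev, inv_mul_cancel_right]
    have hg : u g * u g⁻¹ = 1 := by rw [← map_mul, mul_inv_cancel, map_one]
    rw [mul_assoc (d _), hk, map_mul, hd, add_mul, mul_assoc (d (u k)), hg, mul_one, mul_assoc,
      add_sub_cancel_left]
  have reindex : u k * ∑ g, d (u g) * u g⁻¹ =
      (∑ g, d (u g) * u g⁻¹) * u k - Nat.card G • d (u k) := by
    rw [Finset.mul_sum, Finset.sum_congr rfl fun g _ ↦ translate g, Finset.sum_sub_distrib,
      ← Finset.sum_mul, (Group.mulLeft_bijective k).sum_comp fun g ↦ d (u g) * u g⁻¹,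
      Finset.sum_const, Finset.card_univ, Nat.card_eq_fintype_card]
  rw [Ring.lie_def, reindex, sub_sub_cancel]

theorem fDerivations_monoidAlgebra_eq_range_ad {R G : Type*} [CommRing R] [Group G] [Finite G]
    (h : IsUnit (Nat.card G : R)) :
    fDerivations R (MonoidAlgebra R G) =
      (LieAlgebra.ad R (MonoidAlgebra R G)).toLinearMap.range := by
  refine le_antisymm (fun d hd ↦ ?_) ?_
  · have : Fintype G := .ofFinite G
    let u := MonoidAlgebra.of R G
    refine ⟨(h.unit⁻¹ : Rˣ) • ∑ g, d (u g) * u g⁻¹, ?_⟩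
    refine (MonoidAlgebra.basis G R).ext fun k ↦ ?_
    have averaged : ⁅∑ g, d (u g) * u g⁻¹, u k⁆ = h.unit • d (u k) := by
      rw [lie_sum_apply_mul_inv hd, Units.smul_def, h.unit_spec, Nat.cast_smul_eq_nsmul]
    change ⁅h.unit⁻¹ • ∑ g, d (u g) * u g⁻¹, u k⁆ = d (u k)
    rw [Units.smul_def, smul_lie, averaged, ← Units.smul_def, inv_smul_smul]
  · rintro _ ⟨a, rfl⟩
    exact ad_mem_fDerivations R a

theorem mem_center_monoidAlgebra_iff {R G : Type*} [CommSemiring R] [Group G]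
    {x : MonoidAlgebra R G} :
    x ∈ Subalgebra.center R (MonoidAlgebra R G) ↔
      ∀ g h : G, IsConj g h → x.coeff g = x.coeff h := by
  rw [Subalgebra.mem_center_iff]
  constructor
  · intro hx g h hgh
    obtain ⟨c, rfl⟩ := isConj_iff.mp hgh
    simpa using congrArg (fun y ↦ y.coeff (c * g)) (hx (MonoidAlgebra.of R G c))
  · intro hx y
    induction y using MonoidAlgebra.induction_linear with
    | zero => rw [zero_mul, mul_zero]
    | add y z hy hz => rw [add_mul, mul_add, hy, hz]
    | single g r =>
      ext h
      have : IsConj (g⁻¹ * h) (h * g⁻¹) := isConj_iff.mpr ⟨g, by group⟩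
      simp [hx _ _ this, mul_comm r]

/-- The center of a finite group algebra is the space of class functions, an element being read as
the function of its coefficients. -/
noncomputable def centerMonoidAlgebraEquiv (R G : Type*) [CommSemiring R] [Group G] [Finite G] :
    Subalgebra.center R (MonoidAlgebra R G) ≃ₗ[R] (ConjClasses G → R) where
  toFun x c := Quotient.liftOn c x.1.coeff (mem_center_monoidAlgebra_iff.mp x.2)
  map_add' x y := by
    ext c
    induction c using Quotient.inductionOn
    rfl
  map_smul' r x := by
    ext c
    induction c using Quotient.inductionOn
    rfl
  invFun f := ⟨.ofCoeff (Finsupp.equivFunOnFinite.symm fun g ↦ f (ConjClasses.mk g)),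
    mem_center_monoidAlgebra_iff.mpr fun g h hgh ↦
      congrArg f (ConjClasses.mk_eq_mk_iff_isConj.mpr hgh)⟩
  left_inv x := by ext; rfl
  right_inv f := by
    ext c
    induction c using Quotient.inductionOn
    rfl

theorem finrank_fDerivations_monoidAlgebra {F G : Type*} [Field F] [Group G]
    [Finite G] (h : (Nat.card G : F) ≠ 0) :
    Module.finrank F (fDerivations F (MonoidAlgebra F G)) =
      Nat.card G - Nat.card (ConjClasses G) := by
  have : Module.Finite F (MonoidAlgebra F G) := .of_basis (MonoidAlgebra.basis G F)
  have : Fintype (ConjClasses G) := .ofFinite _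
  have dim_center : Module.finrank F (Subalgebra.center F (MonoidAlgebra F G)) =
      Nat.card (ConjClasses G) := by
    rw [(centerMonoidAlgebraEquiv F G).finrank_eq, Module.finrank_fintype_fun_eq_card,
      Nat.card_eq_fintype_card]
  have rank_nullity :=
    (LieAlgebra.ad F (MonoidAlgebra F G)).toLinearMap.finrank_range_add_finrank_ker
  rw [← fDerivations_monoidAlgebra_eq_range_ad h.isUnit, ker_ad_eq_center,
    Subalgebra.finrank_toSubmodule, dim_center,
    Module.finrank_eq_nat_card_basis (MonoidAlgebra.basis G F)] at rank_nullity
  exact Nat.eq_sub_of_add_eq rank_nullity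

end Derivations

section IndexTwo

variable {G : Type*} [Group G]

theorem zpowers_inv_mul_sup_zpowers (x z : G) :
    Subgroup.zpowers (x⁻¹ * z) ⊔ Subgroup.zpowers z =
      Subgroup.zpowers x ⊔ Subgroup.zpowers z := by
  have z_mem (y : G) : z ∈ Subgroup.zpowers y ⊔ Subgroup.zpowers z :=
    Subgroup.mem_sup_right (Subgroup.mem_zpowers z)
  have mem_self (y : G) : y ∈ Subgroup.zpowers y ⊔ Subgroup.zpowers z :=
    Subgroup.mem_sup_left (Subgroup.mem_zpowers y)
  refine le_antisymm (sup_le ?_ le_sup_right) (sup_le ?_ le_sup_right)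
  · exact Subgroup.zpowers_le.mpr (mul_mem (inv_mem (mem_self x)) (z_mem x))
  · have x_inv_mem := (Subgroup.mul_mem_cancel_right _ (z_mem (x⁻¹ * z))).mp (mem_self (x⁻¹ * z))
    exact Subgroup.zpowers_le.mpr (inv_mem_iff.mp x_inv_mem)

theorem natCard_inf_mul_relIndex (H K : Subgroup G) :
    Nat.card (H ⊓ K : Subgroup G) * H.relIndex K = Nat.card K := by
  rw [← Subgroup.inf_relIndex_right, ← Subgroup.relIndex_bot_left,
    Subgroup.relIndex_mul_relIndex _ _ _ bot_le inf_le_right, Subgroup.relIndex_bot_left]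

theorem natCard_sup_of_disjoint {H K : Subgroup G} [K.Normal] (h : Disjoint H K) :
    Nat.card (H ⊔ K : Subgroup G) = Nat.card H * Nat.card K := by
  have relIndex_eq : K.relIndex H = Nat.card H := by
    rw [← natCard_inf_mul_relIndex K H, h.symm.eq_bot, Subgroup.card_bot, one_mul]
  rw [← natCard_inf_mul_relIndex K (H ⊔ K), inf_of_le_left le_sup_right,
    Subgroup.relIndex_sup_right, relIndex_eq, mul_comm]

theorem index_eq_two_of_sup_zpowers_eq_top {N : Subgroup G} [N.Normal] {b : G} (hb : b ∉ N)
    (hb2 : b ^ 2 ∈ N) (htop : N ⊔ Subgroup.zpowers b = ⊤) : N.index = 2 := by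
  refine Subgroup.index_eq_two_iff_exists_notMem_and.mpr ⟨b, hb, fun g ↦ ?_⟩
  obtain ⟨y, hy, _, ⟨k, rfl⟩, rfl⟩ :=
    Subgroup.mem_sup_of_normal_left.mp (htop ▸ Subgroup.mem_top g)
  have zpow_mem_of_even {m : ℤ} (hm : Even m) : b ^ m ∈ N := by
    obtain ⟨j, rfl⟩ := hm.two_dvd
    rw [zpow_mul]
    exact zpow_mem (mod_cast hb2) j
  rcases Int.even_or_odd k with hk | hk
  · exact .inr (mul_mem hy (zpow_mem_of_even hk))
  · left
    rw [mul_assoc, ← zpow_add_one]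
    exact mul_mem hy (zpow_mem_of_even hk.add_one)

theorem sum_natCard_centralizer [Fintype G] :
    ∑ g : G, Nat.card (Subgroup.centralizer {g}) = Nat.card (ConjClasses G) * Nat.card G := by
  rw [← card_comm_eq_card_conjClasses_mul_card,
    Nat.card_congr (Equiv.subtypeProdEquivSigmaSubtype Commute), Nat.card_sigma]
  refine Finset.sum_congr rfl fun g _ ↦ Nat.card_congr (Equiv.subtypeEquivRight fun h ↦ ?_)
  rw [Subgroup.mem_centralizer_singleton_iff, commute_iff_eq, eq_comm]

variable {N : Subgroup G} [IsMulCommutative N] {g : G}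

theorem inf_centralizer_singleton_eq_inf_center (hN : N.index = 2) (hg : g ∉ N) :
    N ⊓ Subgroup.centralizer {g} = N ⊓ Subgroup.center G := by
  refine le_antisymm (fun x hx ↦ ⟨hx.1, Subgroup.mem_center_iff.mpr fun h ↦ ?_⟩)
    (inf_le_inf_left N (Subgroup.center_le_centralizer {g}))
  have hxg : Commute g x := (Subgroup.mem_centralizer_singleton_iff.mp hx.2).symm
  have commute_of_mem {y : G} (hy : y ∈ N) : Commute y x :=
    setLike_mul_comm hy hx.1
  by_cases hh : h ∈ N
  · exact commute_of_mem hh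
  · have hgh : g⁻¹ * h ∈ N := by simp [Subgroup.mul_mem_iff_of_index_two hN, hg, hh]
    rw [← mul_inv_cancel_left g h]
    exact hxg.mul_left (commute_of_mem hgh)

theorem natCard_centralizer_of_notMem (hN : N.index = 2) (hg : g ∉ N) :
    Nat.card (Subgroup.centralizer {g}) = 2 * Nat.card (N ⊓ Subgroup.center G : Subgroup G) := by
  have : N.Normal := Subgroup.normal_of_index_eq_two hN
  have relIndex_eq_two : N.relIndex (Subgroup.centralizer {g}) = 2 := by
    refine ((Nat.dvd_prime Nat.prime_two).mp
      (hN ▸ N.relIndex_dvd_index_of_normal (Subgroup.centralizer {g}))).resolve_left fun h ↦ hg ?_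
    exact Subgroup.relIndex_eq_one.mp h (Subgroup.mem_centralizer_singleton_iff.mpr rfl)
  rw [← natCard_inf_mul_relIndex N, inf_centralizer_singleton_eq_inf_center hN hg,
    relIndex_eq_two, mul_comm]

theorem natCard_centralizer_of_mem (hN : N.index = 2) (hg : g ∈ N)
    (hgc : g ∉ Subgroup.center G) : Nat.card (Subgroup.centralizer {g}) = Nat.card N := by
  have le_centralizer : N ≤ Subgroup.centralizer {g} := fun x hx ↦
    Subgroup.mem_centralizer_singleton_iff.mpr
      (setLike_mul_comm hx hg)
  have index_ne_one : (Subgroup.centralizer {g}).index ≠ 1 := fun h ↦ hgc <| by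
    rw [Subgroup.index_eq_one, Subgroup.centralizer_eq_top_iff_subset] at h
    exact h rfl
  have index_eq_two : (Subgroup.centralizer {g}).index = 2 :=
    ((Nat.dvd_prime Nat.prime_two).mp
      (hN ▸ Subgroup.index_dvd_of_le le_centralizer)).resolve_left index_ne_one
  have relIndex_eq_one : N.relIndex (Subgroup.centralizer {g}) = 1 := by
    have := Subgroup.relIndex_mul_index le_centralizer
    rw [index_eq_two, hN] at this
    omega
  rw [le_antisymm (Subgroup.relIndex_eq_one.mp relIndex_eq_one) le_centralizer]

theorem two_mul_natCard_conjClasses_of_index_eq_two [Finite G] (hN : N.index = 2) :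
    2 * Nat.card (ConjClasses G) =
      Nat.card N + 3 * Nat.card (N ⊓ Subgroup.center G : Subgroup G) := by
  classical
  have : Fintype G := .ofFinite G
  set Z := N ⊓ Subgroup.center G
  have card_G : Nat.card G = Nat.card N * 2 := hN ▸ N.card_mul_index.symm
  have card_centralizer (g : G) : Nat.card (Subgroup.centralizer {g}) =
      (if g ∈ N then Nat.card N else 2 * Nat.card Z) + if g ∈ Z then Nat.card N else 0 := by
    by_cases hg : g ∈ N
    · by_cases hgc : g ∈ Subgroup.center G
      · have : Subgroup.centralizer {g} = ⊤ := by simpa using hgc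
        rw [this, Subgroup.card_top, if_pos hg, if_pos ⟨hg, hgc⟩, card_G, mul_two]
      · rw [natCard_centralizer_of_mem hN hg hgc, if_pos hg, if_neg fun h ↦ hgc h.2, add_zero]
    · rw [natCard_centralizer_of_notMem hN hg, if_neg hg, if_neg fun h ↦ hg h.1, add_zero]
  have card_filter (H : Subgroup G) : (Finset.univ.filter (· ∈ H)).card = Nat.card H := by
    rw [Nat.card_eq_fintype_card, Fintype.card_subtype]
  have card_filter_compl : (Finset.univ.filter (· ∉ N)).card = Nat.card N := by
    have := Finset.card_filter_add_card_filter_not (s := (Finset.univ : Finset G)) (· ∈ N)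
    rw [card_filter, Finset.card_univ, ← Nat.card_eq_fintype_card, card_G] at this
    omega
  have count := sum_natCard_centralizer (G := G)
  simp only [card_centralizer, Finset.sum_add_distrib, Finset.sum_ite, Finset.sum_const,
    card_filter, card_filter_compl, smul_eq_mul, mul_zero, add_zero, card_G] at count
  refine Nat.eq_of_mul_eq_mul_left (Nat.card_pos (α := N)) ?_
  linarith

end IndexTwo

namespace V8n

section Presentation

variable (n : ℕ)

theorem aV_pow_two_mul : aV n ^ (2 * n) = 1 :=
  PresentedGroup.one_of_mem (rels := V8nRels n) (by simp [V8nRels])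

theorem bV_pow_four : bV n ^ 4 = 1 :=
  PresentedGroup.one_of_mem (rels := V8nRels n) (by simp [V8nRels])

theorem bV_mul_aV_sq : (bV n * aV n) ^ 2 = 1 :=
  PresentedGroup.one_of_mem (rels := V8nRels n) (by simp [V8nRels])

theorem bV_inv_mul_aV_sq : ((bV n)⁻¹ * aV n) ^ 2 = 1 :=
  PresentedGroup.one_of_mem (rels := V8nRels n) (by simp [V8nRels])

variable {n}

theorem eq_top_of_aV_mem_of_bV_mem {H : Subgroup (V8n n)} (ha : aV n ∈ H) (hb : bV n ∈ H) :
    H = ⊤ :=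
  Subgroup.eq_top_iff' H |>.mpr <|
    PresentedGroup.generated_by (V8nRels n) H (Fin.forall_fin_two.mpr ⟨ha, hb⟩)

theorem mem_center_of_commute {x : V8n n} (ha : Commute (aV n) x) (hb : Commute (bV n) x) :
    x ∈ Subgroup.center (V8n n) := by
  have centralizer_eq_top : Subgroup.centralizer {x} = ⊤ :=
    eq_top_of_aV_mem_of_bV_mem (Subgroup.mem_centralizer_singleton_iff.mpr ha)
      (Subgroup.mem_centralizer_singleton_iff.mpr hb)
  exact Subgroup.centralizer_eq_top_iff_subset.mp centralizer_eq_top rfl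

/-- The universal property of `V_{8n}`: the homomorphism `a ↦ x`, `b ↦ y` for elements `x`, `y`
satisfying the defining relations. -/
def lift {G : Type*} [Group G] (x y : G) (hx : x ^ (2 * n) = 1) (hy : y ^ 4 = 1)
    (hyx : (y * x) ^ 2 = 1) (hyx' : (y⁻¹ * x) ^ 2 = 1) : V8n n →* G :=
  PresentedGroup.toGroup (f := ![x, y]) (by simp [V8nRels, hx, hy, hyx, hyx'])

variable {G : Type*} [Group G] {x y : G} {hx : x ^ (2 * n) = 1} {hy : y ^ 4 = 1}
  {hyx : (y * x) ^ 2 = 1} {hyx' : (y⁻¹ * x) ^ 2 = 1}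

@[simp]
theorem lift_aV : lift x y hx hy hyx hyx' (aV n) = x :=
  PresentedGroup.toGroup.of _

@[simp]
theorem lift_bV : lift x y hx hy hyx hyx' (bV n) = y :=
  PresentedGroup.toGroup.of _

end Presentation

variable (n : ℕ)

theorem bV_sq_sq : (bV n ^ 2) ^ 2 = 1 := by
  rw [← pow_mul, bV_pow_four]

theorem bV_sq_inv : (bV n ^ 2)⁻¹ = bV n ^ 2 :=
  inv_eq_of_mul_eq_one_right (by rw [← sq, bV_sq_sq])

theorem bV_mul_aV : bV n * aV n = (aV n)⁻¹ * (bV n)⁻¹ := by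
  rw [← mul_inv_rev, eq_inv_iff_mul_eq_one, ← sq, bV_mul_aV_sq]

theorem bV_inv_mul_aV : (bV n)⁻¹ * aV n = (aV n)⁻¹ * bV n := by
  rw [← inv_inv (bV n), ← mul_inv_rev, inv_inv, eq_inv_iff_mul_eq_one, ← sq, bV_inv_mul_aV_sq]

theorem aV_mul_bV : aV n * bV n = (bV n)⁻¹ * (aV n)⁻¹ := by
  rw [← mul_inv_cancel_right (aV n * bV n) (aV n), mul_assoc (aV n), bV_mul_aV,
    mul_inv_cancel_left]

theorem commute_aV_bV_sq : Commute (aV n) (bV n ^ 2) := by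
  calc aV n * bV n ^ 2 = (bV n)⁻¹ * ((aV n)⁻¹ * bV n) := by
        rw [sq, ← mul_assoc, aV_mul_bV, mul_assoc]
    _ = (bV n ^ 2)⁻¹ * aV n := by
        rw [← bV_inv_mul_aV, sq, mul_inv_rev, mul_assoc]
    _ = bV n ^ 2 * aV n := by rw [bV_sq_inv]

theorem bV_sq_mem_center : bV n ^ 2 ∈ Subgroup.center (V8n n) :=
  mem_center_of_commute (commute_aV_bV_sq n) (Commute.self_pow _ _)

theorem bV_mul_aV_mul_bV_inv : bV n * aV n * (bV n)⁻¹ = (aV n)⁻¹ * bV n ^ 2 := by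
  rw [bV_mul_aV, mul_assoc, ← mul_inv_rev, ← sq, bV_sq_inv]

theorem bV_mul_aV_zpow_mul_bV_inv (i : ℤ) :
    bV n * aV n ^ i * (bV n)⁻¹ = (aV n ^ i)⁻¹ * (bV n ^ 2) ^ i := by
  rw [← conj_zpow, bV_mul_aV_mul_bV_inv, (commute_aV_bV_sq n).inv_left.mul_zpow, inv_zpow]

/-- The homomorphism killing `b²` and sending `a` to a rotation of order `2n`; it bounds the order
of `a` from below. -/
def toDihedralGroupTwoMul : V8n n →* DihedralGroup (2 * n) :=
  lift (.r 1) (.sr 0) (by simp) (by simp [pow_succ]) (by simp [sq]) (by simp [sq])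

/-- The homomorphism sending `a` to a reflection and `b` to a rotation of order `4`; it shows that
`b²` is nontrivial and that `a` and `b` do not commute. -/
def toDihedralGroupFour : V8n n →* DihedralGroup 4 :=
  lift (.sr 0) (.r 1)
    (by rw [pow_mul, sq, DihedralGroup.sr_mul_self, one_pow]) (by decide) (by decide) (by decide)

theorem toDihedralGroupTwoMul_bV_sq : toDihedralGroupTwoMul n (bV n ^ 2) = 1 := by
  simp [toDihedralGroupTwoMul, sq]

theorem orderOf_toDihedralGroupTwoMul_aV : orderOf (toDihedralGroupTwoMul n (aV n)) = 2 * n := by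
  rw [toDihedralGroupTwoMul, lift_aV, DihedralGroup.orderOf_r_one]

theorem orderOf_aV : orderOf (aV n) = 2 * n :=
  Nat.dvd_antisymm (orderOf_dvd_of_pow_eq_one (aV_pow_two_mul n)) <|
    orderOf_toDihedralGroupTwoMul_aV n ▸ orderOf_map_dvd (toDihedralGroupTwoMul n) (aV n)

theorem orderOf_bV_sq : orderOf (bV n ^ 2) = 2 := by
  refine orderOf_eq_prime (bV_sq_sq n) fun h ↦ ?_
  have map_bV_sq := congrArg (toDihedralGroupFour n) h
  rw [map_pow, map_one, toDihedralGroupFour, lift_bV] at map_bV_sq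
  exact absurd map_bV_sq (by decide)

theorem disjoint_zpowers_aV_zpowers_bV_sq :
    Disjoint (Subgroup.zpowers (aV n)) (Subgroup.zpowers (bV n ^ 2)) := by
  rw [Subgroup.disjoint_def]
  rintro _ ⟨i, rfl⟩ ⟨j, hj : (bV n ^ 2) ^ j = aV n ^ i⟩
  have map_aV_zpow : toDihedralGroupTwoMul n (aV n) ^ i = 1 := by
    rw [← map_zpow, ← hj, map_zpow, toDihedralGroupTwoMul_bV_sq, one_zpow]
  rwa [← orderOf_dvd_iff_zpow_eq_one, orderOf_toDihedralGroupTwoMul_aV, ← orderOf_aV,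
    orderOf_dvd_iff_zpow_eq_one] at map_aV_zpow

/-- The abelian subgroup `⟨a, b²⟩` of index two in `V_{8n}`. -/
def abelianSubgroup : Subgroup (V8n n) :=
  Subgroup.zpowers (aV n) ⊔ Subgroup.zpowers (bV n ^ 2)

theorem aV_mem_abelianSubgroup : aV n ∈ abelianSubgroup n :=
  Subgroup.mem_sup_left (Subgroup.mem_zpowers _)

theorem bV_sq_mem_abelianSubgroup : bV n ^ 2 ∈ abelianSubgroup n :=
  Subgroup.mem_sup_right (Subgroup.mem_zpowers _)

instance : IsMulCommutative (abelianSubgroup n) := by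
  rw [abelianSubgroup, Subgroup.zpowers_eq_closure, Subgroup.zpowers_eq_closure,
    ← Subgroup.closure_union]
  refine Subgroup.isMulCommutative_closure ?_
  rintro _ (rfl | rfl) _ (rfl | rfl)
  exacts [rfl, commute_aV_bV_sq n, (commute_aV_bV_sq n).symm, rfl]

instance : (Subgroup.zpowers (bV n ^ 2)).Normal where
  conj_mem x hx g := by
    have hxc := Subgroup.zpowers_le.mpr (bV_sq_mem_center n) hx
    rwa [Subgroup.mem_center_iff.mp hxc g, mul_inv_cancel_right]

theorem map_conj_bV_abelianSubgroup :
    (abelianSubgroup n).map (MulAut.conj (bV n)).toMonoidHom = abelianSubgroup n := by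
  have conj_aV : (MulAut.conj (bV n)).toMonoidHom (aV n) = (aV n)⁻¹ * bV n ^ 2 :=
    bV_mul_aV_mul_bV_inv n
  have conj_bV_sq : (MulAut.conj (bV n)).toMonoidHom (bV n ^ 2) = bV n ^ 2 :=
    mul_inv_eq_of_eq_mul (Commute.self_pow (bV n) 2)
  rw [abelianSubgroup, Subgroup.map_sup, MonoidHom.map_zpowers, MonoidHom.map_zpowers,
    conj_aV, conj_bV_sq, zpowers_inv_mul_sup_zpowers]

instance : (abelianSubgroup n).Normal := by
  refine Subgroup.normalizer_eq_top_iff.mp (eq_top_of_aV_mem_of_bV_mem ?_ ?_)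
  · exact Subgroup.le_normalizer (aV_mem_abelianSubgroup n)
  · exact Subgroup.mem_normalizer_iff_map_conj_eq.mpr (map_conj_bV_abelianSubgroup n)

theorem bV_notMem_abelianSubgroup : bV n ∉ abelianSubgroup n := fun h ↦ by
  have map_commute := congrArg (toDihedralGroupFour n)
    (setLike_mul_comm (aV_mem_abelianSubgroup n) h)
  simp only [map_mul, toDihedralGroupFour, lift_aV, lift_bV] at map_commute
  exact absurd map_commute (by decide)

theorem index_abelianSubgroup : (abelianSubgroup n).index = 2 :=
  index_eq_two_of_sup_zpowers_eq_top (bV_notMem_abelianSubgroup n) (bV_sq_mem_abelianSubgroup n) <|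
    eq_top_of_aV_mem_of_bV_mem (Subgroup.mem_sup_left (aV_mem_abelianSubgroup n))
      (Subgroup.mem_sup_right (Subgroup.mem_zpowers _))

theorem natCard_abelianSubgroup : Nat.card (abelianSubgroup n) = 4 * n := by
  rw [abelianSubgroup, natCard_sup_of_disjoint (disjoint_zpowers_aV_zpowers_bV_sq n),
    Nat.card_zpowers, Nat.card_zpowers, orderOf_aV, orderOf_bV_sq]
  ring

theorem natCard : Nat.card (V8n n) = 8 * n := by
  rw [← (abelianSubgroup n).card_mul_index, natCard_abelianSubgroup, index_abelianSubgroup]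
  ring

theorem mem_center_iff_of_mem_abelianSubgroup {x : V8n n} (hx : x ∈ abelianSubgroup n) :
    x ∈ Subgroup.center (V8n n) ↔ bV n * x * (bV n)⁻¹ = x := by
  rw [mul_inv_eq_iff_eq_mul]
  exact ⟨fun h ↦ Subgroup.mem_center_iff.mp h (bV n),
    mem_center_of_commute (setLike_mul_comm (aV_mem_abelianSubgroup n) hx)⟩

theorem aV_zpow_mem_center_iff (i : ℤ) :
    aV n ^ i ∈ Subgroup.center (V8n n) ↔ ((n.lcm 2 : ℕ) : ℤ) ∣ i := by
  have conj_eq_iff : bV n * aV n ^ i * (bV n)⁻¹ = aV n ^ i ↔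
      aV n ^ (2 * i) = 1 ∧ (bV n ^ 2) ^ i = 1 := by
    rw [bV_mul_aV_zpow_mul_bV_inv, inv_mul_eq_iff_eq_mul, ← zpow_add, ← two_mul]
    refine ⟨fun h ↦ ?_, fun h ↦ h.2.trans h.1.symm⟩
    have aV_zpow_eq_one := Subgroup.disjoint_def.mp (disjoint_zpowers_aV_zpowers_bV_sq n)
      (Subgroup.zpow_mem_zpowers _ (2 * i)) (h ▸ Subgroup.zpow_mem_zpowers _ i)
    exact ⟨aV_zpow_eq_one, h.trans aV_zpow_eq_one⟩
  rw [mem_center_iff_of_mem_abelianSubgroup n (zpow_mem (aV_mem_abelianSubgroup n) i),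
    conj_eq_iff, ← orderOf_dvd_iff_zpow_eq_one, ← orderOf_dvd_iff_zpow_eq_one, orderOf_aV,
    orderOf_bV_sq, Nat.cast_mul, Nat.cast_two, mul_dvd_mul_iff_left two_ne_zero,
    ← Int.coe_lcm_dvd_iff]
  rfl

theorem abelianSubgroup_inf_center : abelianSubgroup n ⊓ Subgroup.center (V8n n) =
    Subgroup.zpowers (aV n ^ n.lcm 2) ⊔ Subgroup.zpowers (bV n ^ 2) := by
  have bV_sq_le_center := Subgroup.zpowers_le.mpr (bV_sq_mem_center n)
  refine le_antisymm (fun x hx ↦ ?_) (sup_le ?_ ?_)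
  · obtain ⟨hxN, hxc⟩ := hx
    obtain ⟨y, hy, z, hz, rfl⟩ := Subgroup.mem_sup_of_normal_right.mp hxN
    obtain ⟨i, rfl⟩ := Subgroup.mem_zpowers_iff.mp hy
    obtain ⟨j, rfl⟩ := (aV_zpow_mem_center_iff n i).mp
      ((Subgroup.mul_mem_cancel_right _ (bV_sq_le_center hz)).mp hxc)
    rw [zpow_mul, zpow_natCast]
    exact Subgroup.mul_mem_sup (Subgroup.zpow_mem_zpowers _ j) hz
  · rw [Subgroup.zpowers_le, ← zpow_natCast]
    exact ⟨zpow_mem (aV_mem_abelianSubgroup n) _, (aV_zpow_mem_center_iff n _).mpr dvd_rfl⟩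
  · exact le_inf le_sup_right bV_sq_le_center

variable {n}

theorem natCard_abelianSubgroup_inf_center (hn : 0 < n) :
    Nat.card (abelianSubgroup n ⊓ Subgroup.center (V8n n) : Subgroup (V8n n)) =
      2 * n.gcd 2 := by
  have orderOf_aV_pow_lcm : orderOf (aV n ^ n.lcm 2) = n.gcd 2 := by
    have two_mul_eq : 2 * n = n.gcd 2 * n.lcm 2 := by rw [Nat.gcd_mul_lcm, mul_comm]
    have lcm_pos : 0 < n.lcm 2 := Nat.lcm_pos hn two_pos
    rw [orderOf_pow_of_dvd lcm_pos.ne' (orderOf_aV n ▸ Dvd.intro_left _ two_mul_eq.symm),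
      orderOf_aV, two_mul_eq, Nat.mul_div_cancel _ lcm_pos]
  have disjoint := (disjoint_zpowers_aV_zpowers_bV_sq n).mono_left
    (Subgroup.zpowers_le.mpr (Subgroup.npow_mem_zpowers (aV n) (n.lcm 2)))
  rw [abelianSubgroup_inf_center, natCard_sup_of_disjoint disjoint,
    Nat.card_zpowers, Nat.card_zpowers, orderOf_aV_pow_lcm, orderOf_bV_sq, mul_comm]

theorem natCard_conjClasses (hn : 0 < n) :
    Nat.card (ConjClasses (V8n n)) = 2 * n + 3 * n.gcd 2 := by
  have : Finite (V8n n) := Nat.finite_of_card_ne_zero (by rw [natCard]; omega)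
  have := two_mul_natCard_conjClasses_of_index_eq_two (index_abelianSubgroup n)
  rw [natCard_abelianSubgroup, natCard_abelianSubgroup_inf_center hn] at this
  omega

end V8n

theorem finrank_fDerivations_V8n {F : Type*} [Field F] {n : ℕ} (h : ((8 * n : ℕ) : F) ≠ 0) :
    Module.finrank F (fDerivations F (MonoidAlgebra F (V8n n))) = 3 * (2 * n - n.gcd 2) := by
  have hn : 0 < n := Nat.pos_of_ne_zero fun hn ↦ h (by rw [hn, mul_zero, Nat.cast_zero])
  rw [← V8n.natCard] at h
  have : Finite (V8n n) := Nat.finite_of_card_ne_zero fun h0 ↦ h (by rw [h0, Nat.cast_zero])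
  rw [finrank_fDerivations_monoidAlgebra h, V8n.natCard, V8n.natCard_conjClasses hn]
  omega

theorem eight_mul_natCast_ne_zero {R : Type*} [AddMonoidWithOne R] {n : ℕ} (hn : 0 < n)
    (hchar : CharZero R ∨ ∃ p : ℕ, p.Prime ∧ Odd p ∧ Nat.gcd n p = 1 ∧ CharP R p) :
    ((8 * n : ℕ) : R) ≠ 0 := by
  rcases hchar with _ | ⟨p, hp, hodd, hnp, _⟩
  · exact Nat.cast_ne_zero.mpr (by omega)
  · rw [Ne, CharP.cast_eq_zero_iff R p, ← hp.coprime_iff_not_dvd]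
    have coprime_eight : p.Coprime (2 ^ 3) := (Nat.coprime_two_right.mpr hodd).pow_right 3
    exact coprime_eight.mul_right (Nat.Coprime.symm hnp)

/-- If `char F = 0`, or `char F = p` for an odd prime `p` with
`gcd(n, p) = 1`, then `Der_F(F V_{8n})` has dimension `3(2n-1)` over `F` when `n`
is odd, and dimension `6(n-1)` when `n` is even. -/
theorem dim_fDerivations_V8n (n : ℕ) (hn : 0 < n) (F : Type*) [Field F]
    (hchar : CharZero F ∨ ∃ p : ℕ, p.Prime ∧ Odd p ∧ Nat.gcd n p = 1 ∧ CharP F p) :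
    (Odd n →
      Module.finrank F (fDerivations F (MonoidAlgebra F (V8n n))) = 3 * (2 * n - 1)) ∧
    (Even n →
      Module.finrank F (fDerivations F (MonoidAlgebra F (V8n n))) = 6 * (n - 1)) := by
  rw [finrank_fDerivations_V8n (eight_mul_natCast_ne_zero hn hchar)]
  constructor
  · intro hodd
    rw [Nat.coprime_two_right.mpr hodd]
  · intro heven
    rw [Nat.gcd_eq_right heven.two_dvd]
    omega
end

section
/- Let n be a positive integer and let F be any field. Then the F-vector space Der_inn(F V_{8n}) of inner derivations of the group algebra F V_{8n} has dimension 6(n−1) over F if n is even, and dimension 3(2n−1) over F if n is odd. -/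
/-- The `F`-vector space of inner derivations of an `F`-algebra `A`: the `F`-linear
endomorphisms of the form `α ↦ α * β - β * α` for some `β ∈ A`. -/
def innerDerivations (F : Type*) [CommSemiring F] (A : Type*) [Ring A] [Algebra F A] :
    Submodule F (A →ₗ[F] A) where
  carrier := {d | ∃ β : A, ∀ α : A, d α = α * β - β * α}
  zero_mem' := ⟨0, by simp⟩
  add_mem' := by
    rintro d e ⟨β, hβ⟩ ⟨γ, hγ⟩
    refine ⟨β + γ, fun α => ?_⟩
    simp only [LinearMap.add_apply, hβ α, hγ α, mul_add, add_mul]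
    abel
  smul_mem' := by
    rintro c d ⟨β, hβ⟩
    refine ⟨c • β, fun α => ?_⟩
    simp only [LinearMap.smul_apply, hβ α, mul_smul_comm, smul_mul_assoc, smul_sub]

section InnerDerivations

variable (F A : Type*) [Ring A]

/-- The linear map `β ↦ d_β` sending an element of an algebra to the inner derivation it defines. -/
def innerDerivation [CommSemiring F] [Algebra F A] : A →ₗ[F] A →ₗ[F] A :=
  (LinearMap.mul F A).flip - LinearMap.mul F A

variable {A} in
theorem innerDerivation_apply [CommSemiring F] [Algebra F A] (β α : A) :
    innerDerivation F A β α = α * β - β * α := by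
  simp [innerDerivation]

theorem range_innerDerivation [CommSemiring F] [Algebra F A] :
    LinearMap.range (innerDerivation F A) = innerDerivations F A := by
  ext d
  exact exists_congr fun β => by simp only [LinearMap.ext_iff, innerDerivation_apply, eq_comm]

theorem ker_innerDerivation [CommSemiring F] [Algebra F A] :
    LinearMap.ker (innerDerivation F A) = Subalgebra.toSubmodule (Subalgebra.center F A) := by
  ext β
  simp [LinearMap.ext_iff, innerDerivation_apply, Subalgebra.mem_center_iff, sub_eq_zero]

theorem finrank_innerDerivations_add_finrank_center [Field F] [Algebra F A]
    [FiniteDimensional F A] :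
    Module.finrank F (innerDerivations F A) + Module.finrank F (Subalgebra.center F A) =
      Module.finrank F A := by
  rw [← range_innerDerivation, ← Subalgebra.finrank_toSubmodule, ← ker_innerDerivation]
  exact LinearMap.finrank_range_add_finrank_ker _

end InnerDerivations

section CenterOfGroupAlgebra

open MonoidAlgebra

variable {k G : Type*} [CommSemiring k] [Group G]

theorem mem_center_monoidAlgebra_iff_s2 {β : k[G]} :
    β ∈ Subalgebra.center k k[G] ↔ ∀ g x : G, β.coeff (g * x * g⁻¹) = β.coeff x := by
  have commute_single (g : G) :
      single g 1 * β = β * single g 1 ↔ ∀ x, β.coeff (g * x * g⁻¹) = β.coeff x := by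
    rw [MonoidAlgebra.ext_iff, Finsupp.ext_iff, ← (Equiv.mulLeft g).forall_congr_right]
    simp [coeff_single_mul_apply, coeff_mul_single_apply, eq_comm]
  simp_rw [Subalgebra.mem_center_iff, ← commute_single]
  refine ⟨fun h g => h _, fun h α => ?_⟩
  induction α using MonoidAlgebra.induction_linear with
  | zero => simp
  | add α α' hα hα' => rw [add_mul, mul_add, hα, hα']
  | single g r =>
    have single_eq : single g r = r • single g (1 : k) := by simp
    rw [single_eq, smul_mul_assoc, h, mul_smul_comm]

variable (k G) in
/-- The center of the group algebra of a finite group, identified with the space of class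
functions. -/
noncomputable def centerEquivClassFunctions [Finite G] :
    Subalgebra.center k k[G] ≃ₗ[k] (ConjClasses G → k) where
  toFun β := Quotient.lift β.1.coeff fun x y hxy => by
    obtain ⟨g, rfl⟩ := isConj_iff.mp hxy
    exact (mem_center_monoidAlgebra_iff_s2.mp β.2 g x).symm
  map_add' β γ := by
    ext ⟨x⟩
    rfl
  map_smul' r β := by
    ext ⟨x⟩
    rfl
  invFun f := ⟨.ofCoeff (Finsupp.equivFunOnFinite.symm (f ∘ ConjClasses.mk)),
    mem_center_monoidAlgebra_iff_s2.mpr fun g x => congrArg f <|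
      ConjClasses.mk_eq_mk_iff_isConj.mpr (isConj_iff.mpr ⟨g, rfl⟩).symm⟩
  left_inv β := by
    ext x
    rfl
  right_inv f := by
    ext ⟨x⟩
    rfl

theorem finrank_center_monoidAlgebra [StrongRankCondition k] [Finite G] :
    Module.finrank k (Subalgebra.center k k[G]) = Nat.card (ConjClasses G) := by
  have := Fintype.ofFinite (ConjClasses G)
  rw [(centerEquivClassFunctions k G).finrank_eq, Module.finrank_fintype_fun_eq_card,
    Nat.card_eq_fintype_card]

theorem finrank_innerDerivations_monoidAlgebra_add_card_conjClasses (F G : Type*) [Field F]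
    [Group G] [Finite G] :
    Module.finrank F (innerDerivations F F[G]) + Nat.card (ConjClasses G) = Nat.card G := by
  have := Fintype.ofFinite G
  have : FiniteDimensional F F[G] := (MonoidAlgebra.basis G F).finiteDimensional_of_finite
  rw [← finrank_center_monoidAlgebra (k := F), finrank_innerDerivations_add_finrank_center,
    Module.finrank_eq_nat_card_basis (MonoidAlgebra.basis G F)]

end CenterOfGroupAlgebra

section ConjClasses

open Subgroup Finset

variable {G : Type*} [Group G]

theorem card_conjClasses_congr {H : Type*} [Group H] (e : G ≃* H) :
    Nat.card (ConjClasses G) = Nat.card (ConjClasses H) :=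
  Nat.card_congr <| Quotient.congr e.toEquiv fun x y =>
    ⟨e.toMonoidHom.map_isConj, fun h => e.symm_apply_apply x ▸ e.symm_apply_apply y ▸
      e.symm.toMonoidHom.map_isConj h⟩

theorem sum_card_centralizer [Fintype G] :
    ∑ g : G, Nat.card (centralizer {g}) = Nat.card (ConjClasses G) * Nat.card G := by
  rw [← card_comm_eq_card_conjClasses_mul_card, ← Nat.card_sigma]
  refine Nat.card_congr ((Equiv.subtypeProdEquivSigmaSubtype Commute).trans
    (Equiv.sigmaCongrRight fun g => Equiv.subtypeEquivRight fun x => ?_)).symm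
  rw [mem_centralizer_singleton_iff, eq_comm, commute_iff_eq]

variable {A : Subgroup G} [IsMulCommutative A] (hA : A.index = 2)
include hA

theorem mem_center_of_commute_notMem {x g : G} (hx : x ∈ A) (hg : g ∉ A) (h : Commute x g) :
    x ∈ center G := by
  refine mem_center_iff.mpr fun y => ?_
  by_cases hy : y ∈ A
  · exact setLike_mul_comm hy hx
  · have hyg : y * g⁻¹ ∈ A := by simp [mul_mem_iff_of_index_two hA, hy, hg]
    have : Commute x (y * g⁻¹ * g) :=
      Commute.mul_right (setLike_mul_comm hx hyg) h
    simpa using this.symm.eq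

theorem centralizer_eq_of_mem_of_notMem_center {g : G} (hg : g ∈ A) (hgZ : g ∉ center G) :
    centralizer {g} = A := by
  ext x
  rw [mem_centralizer_singleton_iff]
  refine ⟨fun h => ?_, fun hx => setLike_mul_comm hx hg⟩
  by_contra hx
  exact hgZ (mem_center_of_commute_notMem hA hg hx h.symm)

theorem card_centralizer_of_notMem {g : G} (hg : g ∉ A) :
    Nat.card (centralizer {g}) = 2 * Nat.card (A ⊓ center G : Subgroup G) := by
  have inf_eq : A ⊓ centralizer {g} = A ⊓ center G := by
    ext x
    simp only [Subgroup.mem_inf, and_congr_right_iff, mem_centralizer_singleton_iff]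
    exact fun hx => ⟨mem_center_of_commute_notMem hA hx hg,
      fun h => (mem_center_iff.mp h g).symm⟩
  have relIndex_eq : (A ⊓ center G).relIndex (centralizer {g}) = 2 := by
    rw [← inf_eq, inf_relIndex_right, relIndex_eq_two_iff_exists_notMem_and]
    refine ⟨g, mem_centralizer_singleton_iff.mpr rfl, hg, fun b _ => ?_⟩
    rw [mul_mem_iff_of_index_two hA]
    tauto
  rw [← relIndex_bot_left, ← relIndex_mul_relIndex ⊥ (A ⊓ center G) _ bot_le
    (inf_eq ▸ inf_le_right), relIndex_eq, relIndex_bot_left, mul_comm]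

theorem card_centralizer_of_index_two (g : G) [Decidable (g ∈ A)]
    [Decidable (g ∈ A ⊓ center G)] :
    Nat.card (centralizer {g}) =
      (if g ∈ A then Nat.card A else 2 * Nat.card (A ⊓ center G : Subgroup G)) +
        if g ∈ A ⊓ center G then Nat.card A else 0 := by
  by_cases hg : g ∈ A
  · by_cases hgZ : g ∈ center G
    · have : centralizer {g} = ⊤ := by simpa [centralizer_eq_top_iff_subset] using hgZ
      rw [if_pos hg, if_pos ⟨hg, hgZ⟩, this, card_top, ← A.card_mul_index, hA, mul_two]
    · rw [if_pos hg, if_neg (fun h => hgZ h.2), add_zero,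
        centralizer_eq_of_mem_of_notMem_center hA hg hgZ]
  · rw [if_neg hg, if_neg (fun h => hg h.1), add_zero, card_centralizer_of_notMem hA hg]

theorem two_mul_card_conjClasses_of_index_two [Finite G] :
    2 * Nat.card (ConjClasses G) = Nat.card A + 3 * Nat.card (A ⊓ center G : Subgroup G) := by
  classical
  have := Fintype.ofFinite G
  have card_G : Nat.card G = Nat.card A * 2 := by rw [← A.card_mul_index, hA]
  have card_filter_mem (B : Subgroup G) : #{g | g ∈ B} = Nat.card B := by
    rw [← Fintype.card_subtype, ← Nat.card_eq_fintype_card]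
  have card_filter_notMem : #{g | g ∉ A} = Nat.card A := by
    have := card_filter_add_card_filter_not (s := univ) (· ∈ A)
    rw [card_filter_mem, card_univ, ← Nat.card_eq_fintype_card, card_G] at this
    omega
  refine Nat.eq_of_mul_eq_mul_left (Nat.card_pos (α := A)) ?_
  calc Nat.card A * (2 * Nat.card (ConjClasses G))
      = ∑ g : G, Nat.card (centralizer {g}) := by rw [sum_card_centralizer, card_G]; ring
    _ = Nat.card A * (Nat.card A + 3 * Nat.card (A ⊓ center G : Subgroup G)) := by
        simp only [card_centralizer_of_index_two hA, sum_add_distrib, sum_ite,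
          sum_const, card_filter_mem, card_filter_notMem, smul_eq_mul]
        ring

end ConjClasses

section SemidirectProduct

open SemidirectProduct

variable {N H : Type*} [CommGroup N] [Group H] {φ : H →* MulAut N}

theorem inl_mem_center_iff {x : N} :
    (inl x : N ⋊[φ] H) ∈ Subgroup.center (N ⋊[φ] H) ↔ ∀ h, φ h x = x := by
  simp only [Subgroup.mem_center_iff, SemidirectProduct.ext_iff, mul_left, mul_right, left_inl,
    right_inl, map_one, MulAut.one_apply, mul_one, one_mul, and_true]
  exact ⟨fun h g => by simpa using h (inr g), fun h g => by rw [h, mul_comm]⟩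

theorem two_mul_card_conjClasses_semidirectProduct [Finite N] (hH : Nat.card H = 2) :
    2 * Nat.card (ConjClasses (N ⋊[φ] H)) = Nat.card N + 3 * Nat.card {x // ∀ h, φ h x = x} := by
  have : Finite H := Nat.finite_of_card_ne_zero (by simp [hH])
  have : Finite (N ⋊[φ] H) := Finite.of_equiv _ equivProd.symm
  have index_range_inl : (inl : N →* N ⋊[φ] H).range.index = 2 := by
    rw [range_inl_eq_ker_rightHom, Subgroup.index_ker,
      MonoidHom.range_eq_top.mpr rightHom_surjective, Subgroup.card_top, hH]
  have card_range_inl : Nat.card (inl : N →* N ⋊[φ] H).range = Nat.card N :=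
    Nat.card_congr (MonoidHom.ofInjective inl_injective).symm.toEquiv
  have card_range_inl_inf_center :
      Nat.card ((inl : N →* N ⋊[φ] H).range ⊓ Subgroup.center (N ⋊[φ] H) : Subgroup _) =
        Nat.card {x // ∀ h, φ h x = x} := by
    rw [← Subgroup.map_comap_eq, Subgroup.card_map_of_injective inl_injective]
    exact Nat.card_congr (Equiv.subtypeEquivRight fun x => inl_mem_center_iff)
  rw [two_mul_card_conjClasses_of_index_two index_range_inl, card_range_inl,
    card_range_inl_inf_center]

end SemidirectProduct

section CyclicGroup

open Multiplicative

/-- The cyclic group of order `m`, written multiplicatively; it is infinite for `m = 0`. -/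
abbrev CyclicGroup (m : ℕ) : Type := Multiplicative (ZMod m)

namespace CyclicGroup

/-- The standard generator of `CyclicGroup m`. -/
def gen (m : ℕ) : CyclicGroup m := ofAdd 1

variable {m : ℕ} {G : Type*} [Group G]

theorem mem_zpowers_gen (x : CyclicGroup m) : x ∈ Subgroup.zpowers (gen m) :=
  ⟨(toAdd x).cast, by simp [gen, ← ofAdd_zsmul]⟩

protected theorem card (m : ℕ) : Nat.card (CyclicGroup m) = m :=
  Nat.card_zmod m

theorem orderOf_gen (m : ℕ) : orderOf (gen m) = m := by
  rw [gen, orderOf_ofAdd_eq_addOrderOf, ZMod.addOrderOf_one]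

@[simp]
theorem gen_pow_self (m : ℕ) : gen m ^ m = 1 := by
  rw [← orderOf_dvd_iff_pow_eq_one, orderOf_gen]

@[simp]
theorem gen_two_mul_self : gen 2 * gen 2 = 1 := by
  rw [← sq, gen_pow_self]

@[simp]
theorem gen_two_inv : (gen 2)⁻¹ = gen 2 :=
  inv_eq_of_mul_eq_one_left gen_two_mul_self

theorem hom_ext {f g : CyclicGroup m →* G} (h : f (gen m) = g (gen m)) : f = g :=
  (MonoidHom.eq_iff_eq_on_generator mem_zpowers_gen f g).mpr h

/-- The homomorphism from the cyclic group of order `m` sending the generator to `x`. -/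
noncomputable def lift (x : G) (hx : x ^ m = 1) : CyclicGroup m →* G :=
  monoidHomOfForallMemZpowers mem_zpowers_gen (g' := x) <| by
    rw [orderOf_gen]
    exact orderOf_dvd_of_pow_eq_one hx

@[simp]
theorem lift_gen (x : G) (hx : x ^ m = 1) : lift x hx (gen m) = x :=
  monoidHomOfForallMemZpowers_apply_gen ..

theorem eq_one_or_eq_gen : ∀ x : CyclicGroup 2, x = 1 ∨ x = gen 2 := by
  decide

protected theorem sq_eq_one_iff {n : ℕ} [NeZero n] (x : CyclicGroup (2 * n)) :
    x ^ 2 = 1 ↔ x = 1 ∨ x = gen (2 * n) ^ n := by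
  rw [sq, ← inv_eq_iff_mul_eq_one, ← toAdd.injective.eq_iff, toAdd_inv, ZMod.neg_eq_self_iff,
    mul_right_inj' two_ne_zero]
  refine or_congr toAdd_eq_zero ⟨fun h => ?_, ?_⟩
  · rw [← toAdd.injective.eq_iff, ← ZMod.natCast_zmod_val (toAdd x), h]
    simp [gen]
  · rintro rfl
    have : n < 2 * n := by have := NeZero.pos n; omega
    simp [gen, ZMod.val_natCast, Nat.mod_eq_of_lt this]

theorem gen_pow_ne_one {n : ℕ} [NeZero n] : gen (2 * n) ^ n ≠ 1 := by
  rw [ne_eq, ← orderOf_dvd_iff_pow_eq_one, orderOf_gen]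
  exact Nat.not_dvd_of_pos_of_lt (NeZero.pos n) (by have := NeZero.pos n; omega)

theorem prod_hom_ext {k : ℕ} {f g : CyclicGroup m × CyclicGroup k →* G}
    (hl : f (gen m, 1) = g (gen m, 1)) (hr : f (1, gen k) = g (1, gen k)) : f = g := by
  have comp_inl : f.comp (.inl _ _) = g.comp (.inl _ _) := hom_ext hl
  have comp_inr : f.comp (.inr _ _) = g.comp (.inr _ _) := hom_ext hr
  ext ⟨x, y⟩
  simpa [← map_mul] using
    congrArg₂ (· * ·) (DFunLike.congr_fun comp_inl x) (DFunLike.congr_fun comp_inr y)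

theorem forall_lift_apply_eq_iff {N : Type*} [Group N] {σ : MulAut N} (hσ : σ ^ 2 = 1) {x : N} :
    (∀ h : CyclicGroup 2, lift σ hσ h x = x) ↔ σ x = x := by
  refine ⟨fun h => by simpa using h (gen 2), fun h c => ?_⟩
  obtain rfl | rfl := eq_one_or_eq_gen c <;> simp [h]

end CyclicGroup

end CyclicGroup

section TwistedInversion

variable {C D : Type*} [CommGroup C] [CommGroup D]

/-- The involution `(x, y) ↦ (x⁻¹, χ x * y)` of `C × D`. -/
@[simps! apply]
def twistedInv (χ : C →* D) : MulAut (C × D) where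
  toFun p := (p.1⁻¹, χ p.1 * p.2)
  invFun p := (p.1⁻¹, χ p.1 * p.2)
  left_inv p := by simp
  right_inv p := by simp
  map_mul' p q := by ext <;> simp [mul_comm, mul_mul_mul_comm]

theorem twistedInv_sq (χ : C →* D) : twistedInv χ ^ 2 = 1 := by
  ext p <;> simp [sq]

theorem twistedInv_eq_self_iff {χ : C →* D} {p : C × D} :
    twistedInv χ p = p ↔ p.1 ^ 2 = 1 ∧ χ p.1 = 1 := by
  simp [Prod.ext_iff, sq, inv_eq_iff_mul_eq_one]

end TwistedInversion

section Relations

variable (n : ℕ)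

theorem aV_pow : aV n ^ (2 * n) = 1 :=
  PresentedGroup.one_of_mem (x := FreeGroup.of 0 ^ (2 * n)) (by simp [V8nRels])

theorem bV_pow_four : bV n ^ 4 = 1 :=
  PresentedGroup.one_of_mem (x := FreeGroup.of 1 ^ 4) (by simp [V8nRels])

theorem bV_mul_aV_sq : (bV n * aV n) ^ 2 = 1 :=
  PresentedGroup.one_of_mem (x := (FreeGroup.of 1 * FreeGroup.of 0) ^ 2) (by simp [V8nRels])

theorem inv_bV_mul_aV_sq : ((bV n)⁻¹ * aV n) ^ 2 = 1 :=
  PresentedGroup.one_of_mem (x := ((FreeGroup.of 1)⁻¹ * FreeGroup.of 0) ^ 2) (by simp [V8nRels])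

theorem bV_mul_aV_mul_bV : bV n * aV n * bV n = (aV n)⁻¹ := by
  rw [eq_inv_iff_mul_eq_one, mul_assoc, ← sq, bV_mul_aV_sq]

theorem inv_bV_mul_aV_mul_inv_bV : (bV n)⁻¹ * aV n * (bV n)⁻¹ = (aV n)⁻¹ := by
  rw [eq_inv_iff_mul_eq_one, mul_assoc, ← sq, inv_bV_mul_aV_sq]

theorem commute_aV_bV_sq : Commute (aV n) (bV n ^ 2) := by
  have bV_sq_inv : (bV n ^ 2)⁻¹ = bV n ^ 2 := by
    rw [inv_eq_iff_mul_eq_one, ← pow_add, bV_pow_four]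
  calc aV n * bV n ^ 2
      = (bV n)⁻¹ * (bV n * aV n * bV n) * bV n := by simp [sq, mul_assoc]
    _ = (bV n)⁻¹ * ((bV n)⁻¹ * aV n * (bV n)⁻¹) * bV n := by
        rw [bV_mul_aV_mul_bV, inv_bV_mul_aV_mul_inv_bV]
    _ = (bV n ^ 2)⁻¹ * aV n := by group
    _ = bV n ^ 2 * aV n := by rw [bV_sq_inv]

theorem bV_mul_aV_mul_inv_bV : bV n * aV n * (bV n)⁻¹ = (aV n)⁻¹ * bV n ^ 2 :=
  calc bV n * aV n * (bV n)⁻¹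
      = bV n ^ 2 * ((bV n)⁻¹ * aV n * (bV n)⁻¹) := by group
    _ = (aV n)⁻¹ * bV n ^ 2 := by
        rw [inv_bV_mul_aV_mul_inv_bV, (commute_aV_bV_sq n).inv_left.eq]

end Relations

section Model

open CyclicGroup SemidirectProduct

variable (n : ℕ)

/-- The surjection `C_{2n} → C_2`, whose kernel consists of the even powers of the generator. -/
noncomputable def parity : CyclicGroup (2 * n) →* CyclicGroup 2 :=
  lift (gen 2) (by rw [pow_mul, gen_pow_self, one_pow])

@[simp]
theorem parity_gen : parity n (gen (2 * n)) = gen 2 :=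
  lift_gen ..

/-- The semidirect product `(C_{2n} × C_2) ⋊ C_2` modelling `V_{8n}`: the generators of the three
factors correspond to `a`, `b²` and the involution `ba`, which conjugates `a` to `a⁻¹b²`. -/
abbrev V8nModel : Type :=
  (CyclicGroup (2 * n) × CyclicGroup 2) ⋊[lift (twistedInv (parity n)) (twistedInv_sq _)]
    CyclicGroup 2

namespace V8nModel

/-- The element of `V8nModel n` corresponding to `aV n`. -/
noncomputable def a : V8nModel n := inl (gen (2 * n), 1)

/-- The element of `V8nModel n` corresponding to `bV n`, written as `b = (ba)a⁻¹`. -/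
noncomputable def b : V8nModel n := inr (gen 2) * inl (gen (2 * n), 1)⁻¹

theorem b_mul_a : b n * a n = inr (gen 2) := by
  rw [b, a, mul_assoc, ← map_mul, inv_mul_cancel, map_one, mul_one]

theorem a_pow : a n ^ (2 * n) = 1 := by
  rw [a, ← map_pow, Prod.pow_mk, gen_pow_self, one_pow, Prod.mk_one_one, map_one]

theorem b_sq : b n ^ 2 = inl (1, gen 2) := by
  refine SemidirectProduct.ext (Prod.ext ?_ ?_) ?_ <;> simp [b, sq]

theorem b_pow_four : b n ^ 4 = 1 := by
  rw [pow_mul (b n) 2 2, b_sq, ← map_pow, Prod.pow_mk, gen_pow_self, one_pow, Prod.mk_one_one,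
    map_one]

theorem b_mul_a_sq : (b n * a n) ^ 2 = 1 := by
  rw [b_mul_a, ← map_pow, gen_pow_self, map_one]

theorem inv_b_mul_a_sq : ((b n)⁻¹ * a n) ^ 2 = 1 := by
  have inv_b_mul_a : (b n)⁻¹ * a n = (b n ^ 2)⁻¹ * (b n * a n) := by group
  rw [inv_b_mul_a, b_sq, b_mul_a]
  refine SemidirectProduct.ext (Prod.ext ?_ ?_) ?_ <;> simp [sq]

/-- The homomorphism `V_{8n} → V8nModel n` given by the presentation. -/
noncomputable def ofV8n : V8n n →* V8nModel n :=
  PresentedGroup.toGroup (f := ![a n, b n]) <| by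
    rintro r (rfl | rfl | rfl | rfl)
    · simpa using a_pow n
    · simpa using b_pow_four n
    · simpa using b_mul_a_sq n
    · simpa using inv_b_mul_a_sq n

@[simp]
theorem ofV8n_aV : ofV8n n (aV n) = a n :=
  PresentedGroup.toGroup.of _

@[simp]
theorem ofV8n_bV : ofV8n n (bV n) = b n :=
  PresentedGroup.toGroup.of _

/-- The homomorphism from the abelian normal subgroup of `V8nModel n` to `V_{8n}` with image
`⟨a, b²⟩`. -/
noncomputable def baseToV8n : CyclicGroup (2 * n) × CyclicGroup 2 →* V8n n :=
  (lift (aV n) (aV_pow n)).noncommCoprod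
    (lift (bV n ^ 2) (by rw [← pow_mul, bV_pow_four])) fun x y => by
      obtain ⟨i, rfl⟩ := mem_zpowers_gen x
      obtain ⟨j, rfl⟩ := mem_zpowers_gen y
      simpa using (commute_aV_bV_sq n).zpow_zpow i j

@[simp]
theorem baseToV8n_gen_left : baseToV8n n (gen (2 * n), 1) = aV n := by
  simp [baseToV8n]

@[simp]
theorem baseToV8n_gen_right : baseToV8n n (1, gen 2) = bV n ^ 2 := by
  simp [baseToV8n]

theorem baseToV8n_twistedInv (x : CyclicGroup (2 * n) × CyclicGroup 2) :
    baseToV8n n (twistedInv (parity n) x) = MulAut.conj (bV n * aV n) (baseToV8n n x) := by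
  suffices (baseToV8n n).comp (twistedInv (parity n)).toMonoidHom =
      (MulAut.conj (bV n * aV n)).toMonoidHom.comp (baseToV8n n) from DFunLike.congr_fun this x
  refine prod_hom_ext ?_ ?_
  · have twistedInv_gen_left : twistedInv (parity n) (gen (2 * n), 1) =
        (gen (2 * n), 1)⁻¹ * (1, gen 2) := by simp
    calc baseToV8n n (twistedInv (parity n) (gen (2 * n), 1))
        = (aV n)⁻¹ * bV n ^ 2 := by
          rw [twistedInv_gen_left, map_mul, map_inv, baseToV8n_gen_left, baseToV8n_gen_right]
      _ = bV n * aV n * (bV n)⁻¹ := (bV_mul_aV_mul_inv_bV n).symm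
      _ = MulAut.conj (bV n * aV n) (baseToV8n n (gen (2 * n), 1)) := by
          rw [baseToV8n_gen_left, MulAut.conj_apply]
          group
  · have twistedInv_gen_right : twistedInv (parity n) (1, gen 2) = (1, gen 2) := by simp
    have commute_bV_sq : Commute (bV n * aV n) (bV n ^ 2) :=
      ((Commute.refl (bV n)).pow_right 2).mul_left (commute_aV_bV_sq n)
    calc baseToV8n n (twistedInv (parity n) (1, gen 2))
        = bV n ^ 2 := by rw [twistedInv_gen_right, baseToV8n_gen_right]
      _ = MulAut.conj (bV n * aV n) (baseToV8n n (1, gen 2)) := by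
          rw [baseToV8n_gen_right, MulAut.conj_apply, commute_bV_sq.mul_inv_cancel]

/-- The homomorphism `V8nModel n → V_{8n}` sending the generator of the acting factor to `ba`. -/
noncomputable def toV8n : V8nModel n →* V8n n :=
  SemidirectProduct.lift (baseToV8n n) (lift (bV n * aV n) (bV_mul_aV_sq n)) fun h => by
    ext1 x
    obtain rfl | rfl := eq_one_or_eq_gen h
    · simp
    · simpa using baseToV8n_twistedInv n x

theorem toV8n_inr_gen : toV8n n (inr (gen 2)) = bV n * aV n := by
  simp [toV8n]

theorem toV8n_inl (x : CyclicGroup (2 * n) × CyclicGroup 2) :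
    toV8n n (inl x) = baseToV8n n x := by
  simp [toV8n]

theorem toV8n_comp_ofV8n : (toV8n n).comp (ofV8n n) = .id _ := by
  have map_a : toV8n n (a n) = aV n := by simp [a, toV8n_inl]
  have map_b : toV8n n (b n) = bV n := by
    rw [b, map_mul, toV8n_inr_gen, toV8n_inl, map_inv, baseToV8n_gen_left, mul_inv_cancel_right]
  refine PresentedGroup.ext fun i => ?_
  fin_cases i
  · exact (congrArg (toV8n n) (ofV8n_aV n)).trans map_a
  · exact (congrArg (toV8n n) (ofV8n_bV n)).trans map_b

theorem ofV8n_comp_toV8n : (ofV8n n).comp (toV8n n) = .id _ := by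
  refine SemidirectProduct.hom_ext (prod_hom_ext ?_ ?_) (CyclicGroup.hom_ext ?_)
  · simp [toV8n_inl, a]
  · simp [toV8n_inl, b_sq]
  · simp [toV8n_inr_gen, b_mul_a]

end V8nModel

/-- The isomorphism between `V_{8n}` and its model. -/
noncomputable def v8nEquivModel : V8n n ≃* V8nModel n :=
  (V8nModel.ofV8n n).toMulEquiv (V8nModel.toV8n n) (V8nModel.toV8n_comp_ofV8n n)
    (V8nModel.ofV8n_comp_toV8n n)

theorem card_V8n : Nat.card (V8n n) = 8 * n := by
  rw [Nat.card_congr (v8nEquivModel n).toEquiv, Nat.card_congr equivProd, Nat.card_prod,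
    Nat.card_prod, CyclicGroup.card, CyclicGroup.card]
  ring

theorem two_mul_card_conjClasses_V8n [NeZero n] :
    2 * Nat.card (ConjClasses (V8n n)) =
      4 * n + 6 * Nat.card {x : CyclicGroup (2 * n) // x ^ 2 = 1 ∧ parity n x = 1} := by
  rw [card_conjClasses_congr (v8nEquivModel n),
    two_mul_card_conjClasses_semidirectProduct (CyclicGroup.card 2)]
  simp_rw [forall_lift_apply_eq_iff, twistedInv_eq_self_iff]
  rw [Nat.card_congr (Equiv.prodSubtypeFstEquivSubtypeProd
    (p := fun x : CyclicGroup (2 * n) => x ^ 2 = 1 ∧ parity n x = 1)), Nat.card_prod,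
    Nat.card_prod, CyclicGroup.card, CyclicGroup.card]
  ring

variable {n}

theorem parity_gen_pow_eq_one_iff {k : ℕ} : parity n (gen (2 * n) ^ k) = 1 ↔ Even k := by
  rw [map_pow, parity_gen, ← orderOf_dvd_iff_pow_eq_one, orderOf_gen, even_iff_two_dvd]

theorem card_conjClasses_V8n_of_even [NeZero n] (hn : Even n) :
    Nat.card (ConjClasses (V8n n)) = 2 * n + 6 := by
  have fixed_iff (x : CyclicGroup (2 * n)) :
      x ^ 2 = 1 ∧ parity n x = 1 ↔ x ∈ ({1, gen (2 * n) ^ n} : Set _) := by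
    rw [CyclicGroup.sq_eq_one_iff, and_iff_left_of_imp, Set.mem_insert_iff, Set.mem_singleton_iff]
    rintro (rfl | rfl)
    · exact map_one _
    · exact parity_gen_pow_eq_one_iff.mpr hn
  have := two_mul_card_conjClasses_V8n n
  rw [Nat.card_congr (Equiv.subtypeEquivRight fixed_iff), Nat.card_coe_set_eq,
    Set.ncard_pair gen_pow_ne_one.symm] at this
  omega

theorem card_conjClasses_V8n_of_odd (hn : Odd n) :
    Nat.card (ConjClasses (V8n n)) = 2 * n + 3 := by
  have : NeZero n := ⟨hn.pos.ne'⟩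
  have fixed_iff (x : CyclicGroup (2 * n)) : x ^ 2 = 1 ∧ parity n x = 1 ↔ x = 1 := by
    rw [CyclicGroup.sq_eq_one_iff]
    constructor
    · rintro ⟨rfl | rfl, parity_eq⟩
      · rfl
      · exact absurd (parity_gen_pow_eq_one_iff.mp parity_eq) (Nat.not_even_iff_odd.mpr hn)
    · rintro rfl
      exact ⟨Or.inl rfl, map_one _⟩
  have := two_mul_card_conjClasses_V8n n
  rw [Nat.card_congr (Equiv.subtypeEquivRight fixed_iff),
    Nat.card_unique (α := {x : CyclicGroup (2 * n) // x = 1})] at this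
  omega

end Model

/-- For any field `F`, the space `Der_inn(F V_{8n})` of inner
derivations of `F V_{8n}` has dimension `6(n-1)` over `F` when `n` is even, and
dimension `3(2n-1)` when `n` is odd. -/
theorem dim_innerDerivations_V8n (n : ℕ) (hn : 0 < n) (F : Type*) [Field F] :
    (Even n →
      Module.finrank F (innerDerivations F (MonoidAlgebra F (V8n n))) = 6 * (n - 1)) ∧
    (Odd n →
      Module.finrank F (innerDerivations F (MonoidAlgebra F (V8n n))) = 3 * (2 * n - 1)) := by
  have : NeZero n := ⟨hn.ne'⟩
  have : Finite (V8n n) := Nat.finite_of_card_ne_zero (by rw [card_V8n]; omega)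
  have finrank_add := finrank_innerDerivations_monoidAlgebra_add_card_conjClasses F (V8n n)
  rw [card_V8n] at finrank_add
  refine ⟨fun h_even => ?_, fun h_odd => ?_⟩
  · have := card_conjClasses_V8n_of_even h_even
    omega
  · have := card_conjClasses_V8n_of_odd h_odd
    omega
end

section
/- Let F be a field with char(F) ≠ 2, let G be a finite group, and let g ∈ G be an element of order n. If C̄(g) ≠ {0} and C̄(g^{-1}) = C̄(g), then n is even. -/
/-- The anti-centralizer `C̄(β) = {α ∣ α * β = -(β * α)}` of an element `β` of an
`F`-algebra `A`, as an `F`-subspace of `A`. -/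
def antiCentralizer (F : Type*) [CommSemiring F] {A : Type*} [Ring A] [Algebra F A]
    (β : A) : Submodule F A where
  carrier := {α | α * β = -(β * α)}
  zero_mem' := by simp
  add_mem' := by
    intro x y hx hy
    simp only [Set.mem_setOf_eq] at *
    rw [add_mul, mul_add, hx, hy, neg_add]
  smul_mem' := by
    intro c x hx
    simp only [Set.mem_setOf_eq] at *
    rw [smul_mul_assoc, hx, mul_smul_comm, smul_neg]

section Algebra

variable {F A : Type*} [CommSemiring F] [Ring A] [Algebra F A] {a b : A} {n : ℕ}

theorem mem_antiCentralizer_iff_semiconjBy :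
    a ∈ antiCentralizer F b ↔ SemiconjBy a b (-b) := by
  rw [SemiconjBy, neg_mul]
  rfl

theorem antiCentralizer_le_antiCentralizer_pow_of_odd (hn : Odd n) :
    antiCentralizer F b ≤ antiCentralizer F (b ^ n) := by
  intro a ha
  rw [mem_antiCentralizer_iff_semiconjBy] at ha ⊢
  simpa only [hn.neg_pow] using ha.pow_right n

theorem antiCentralizer_one_eq_bot (h2 : IsSMulRegular A (2 : F)) :
    antiCentralizer F (1 : A) = ⊥ := by
  refine (Submodule.eq_bot_iff _).mpr fun a ha ↦ h2.right_eq_zero_of_smul ?_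
  have eq_neg_self : a = -a := by
    simpa only [SemiconjBy, mul_one, neg_mul, one_mul]
      using mem_antiCentralizer_iff_semiconjBy.mp ha
  rwa [two_smul, ← eq_neg_iff_add_eq_zero]

theorem even_orderOf_of_antiCentralizer_inv_eq_general (h2 : IsSMulRegular A (2 : F))
    (hb : b ^ n = 1) (hne : antiCentralizer F b ≠ ⊥) : Even n := by
  by_contra hn
  have hle : antiCentralizer F b ≤ antiCentralizer F (1 : A) :=
    hb ▸ antiCentralizer_le_antiCentralizer_pow_of_odd (Nat.not_even_iff_odd.mp hn)
  exact hne (le_bot_iff.mp (hle.trans (antiCentralizer_one_eq_bot h2).le))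

end Algebra

/-- Let `F` be a field with `char F ≠ 2`, `G` a finite group and
`g ∈ G` an element of order `n`. If `C̄(g) ≠ {0}` and `C̄(g⁻¹) = C̄(g)` in the group
algebra `FG`, then `n` is even. -/
theorem even_orderOf_of_antiCentralizer_inv_eq
    (F : Type*) [Field F] (hF : ringChar F ≠ 2)
    (G : Type*) [Group G] [Finite G] (g : G) (n : ℕ) (hord : orderOf g = n)
    (hne : antiCentralizer F (MonoidAlgebra.of F G g) ≠ ⊥)
    (heq : antiCentralizer F (MonoidAlgebra.of F G g⁻¹) =
      antiCentralizer F (MonoidAlgebra.of F G g)) :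
    Even n := by
  have hpow : MonoidAlgebra.of F G g ^ n = 1 := by
    rw [← map_pow, ← hord, pow_orderOf_eq_one, map_one]
  exact even_orderOf_of_antiCentralizer_inv_eq_general
    (.of_ne_zero (Ring.two_ne_zero hF)) hpow hne
end
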